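/- arXiv:1204.3795 — 7 statements merged into one kernel-verified Lean document; each statement's English description precedes it below -/
import Mathlib

section
/- Let p ≥ 5 be prime and n ≥ 0 an integer, and set m = (2n+1)p + 4·N(p/6). Then m is odd, and: if p ≡ 1 (mod 6) then 3m+2 = (3(2n+1)+2)·p, while if p ≡ 5 (mod 6) then 3m-2 = (3(2n+1)+2)·p. In either case p divides one of 3m-2, 3m+2 with cofactor 3(2n+1)+2 > 1, so 3m-2 and 3m+2 are not both prime; i.e., m is a non-rank. -/
/-! A prime `p ≥ 5` is `6k + 1` or `6k + 5`, and `N(p/6)` is then `k` or `k + 1`, so that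
`12 N(p/6)` is `2p - 2` or `2p + 2`. Hence `3m + 2` or `3m - 2` equals `(3(2n+1) + 2) p`,
a product of two integers greater than one. -/

theorem prime_mod_six {p : ℤ} (hp : Prime p) (h5 : 5 ≤ p) : p % 6 = 1 ∨ p % 6 = 5 := by
  have key : ∀ q : ℤ, 2 ≤ q → q ≤ 3 → ¬ q ∣ p := by
    rintro q hq hq' ⟨c, hc⟩
    rcases hp.irreducible.isUnit_or_isUnit hc with h | h <;> rw [Int.isUnit_iff] at h
    · omega
    · rcases h with rfl | rfl <;> omega
  have h2 := key 2 (by norm_num) (by norm_num)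
  have h3 := key 3 (by norm_num) (by norm_num)
  omega

theorem round_div_six_of_mod_one {p : ℤ} (h : p % 6 = 1) :
    6 * round ((p : ℚ) / 6) = p - 1 := by
  obtain ⟨k, rfl⟩ : ∃ k, p = 6 * k + 1 := ⟨p / 6, by omega⟩
  have : round (((6 * k + 1 : ℤ) : ℚ) / 6) = k := by
    rw [round_eq, Int.floor_eq_iff]
    push_cast
    constructor <;> linarith
  rw [this]; ring

theorem round_div_six_of_mod_five {p : ℤ} (h : p % 6 = 5) :
    6 * round ((p : ℚ) / 6) = p + 1 := by
  obtain ⟨k, rfl⟩ : ∃ k, p = 6 * k + 5 := ⟨p / 6, by omega⟩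
  have : round (((6 * k + 5 : ℤ) : ℚ) / 6) = k + 1 := by
    rw [round_eq, Int.floor_eq_iff]
    push_cast
    constructor <;> linarith
  rw [this]; ring

theorem not_prime_mul_of_one_lt {a b : ℤ} (ha : 1 < a) (hb : 1 < b) : ¬ Prime (a * b) := by
  intro h
  rcases h.irreducible.isUnit_or_isUnit rfl with h | h <;> rw [Int.isUnit_iff] at h <;> omega

/-- Lemma 2.5 (plus case): for a prime `p ≥ 5` and integer `n ≥ 0`, the odd number
`m = (2n+1)p + 4·N(p/6)` is a non-rank: if `p ≡ 1 (mod 6)` then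
`3m+2 = (3(2n+1)+2)p`, if `p ≡ 5 (mod 6)` then `3m-2 = (3(2n+1)+2)p`, and
`3m-2`, `3m+2` are not both prime. -/
theorem nonrank_plus (p : ℤ) (hp : Prime p) (h5 : 5 ≤ p) (n : ℤ) (hn : 0 ≤ n)
    (m : ℤ) (hm : m = (2 * n + 1) * p + 4 * round ((p : ℚ) / 6)) :
    Odd m ∧
    (p % 6 = 1 → 3 * m + 2 = (3 * (2 * n + 1) + 2) * p) ∧
    (p % 6 = 5 → 3 * m - 2 = (3 * (2 * n + 1) + 2) * p) ∧
    1 < 3 * (2 * n + 1) + 2 ∧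
    ¬(Prime (3 * m - 2) ∧ Prime (3 * m + 2)) := by
  have hmod := prime_mod_six hp h5
  have h1 : p % 6 = 1 → 3 * m + 2 = (3 * (2 * n + 1) + 2) * p := fun h => by
    rw [hm]; linear_combination 2 * round_div_six_of_mod_one h
  have h2 : p % 6 = 5 → 3 * m - 2 = (3 * (2 * n + 1) + 2) * p := fun h => by
    rw [hm]; linear_combination 2 * round_div_six_of_mod_five h
  have hc : 1 < 3 * (2 * n + 1) + 2 := by omega
  refine ⟨?_, h1, h2, hc, ?_⟩
  · have hpo : Odd p := by rw [Int.odd_iff]; omega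
    rw [hm]
    exact ((odd_two_mul_add_one n).mul hpo).add_even (Even.mul_right (by decide) _)
  · rintro ⟨hminus, hplus⟩
    have hnp := not_prime_mul_of_one_lt hc (show 1 < p by omega)
    rcases hmod with h | h
    · exact hnp (h1 h ▸ hplus)
    · exact hnp (h2 h ▸ hminus)
end

section
/- Let m > 3 be an odd integer that is a non-rank, i.e., 3m-2 and 3m+2 are not both prime. Then there exists a prime p ≥ 5 such that either m = j·p + 4·N(p/6) for some odd integer j ≥ 1, or m = j·p - 4·N(p/6) for some odd integer j ≥ 3. -/
/-! If `n = 3m + 2s` with `s = ±1` is composite, write `n = p * c` with `p` prime and `c > 1`. As `n`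
is coprime to `6`, so are `p` and `c`; write `p = 6k + e` with `e = ±1`, so that `N(p/6) = k` and
`12k = 2p - 2e`. Hence `m = j * p + 4k` is equivalent to `3m + 2e = p * (3j + 2)`, and
`m = j * p - 4k` to `3m - 2e = p * (3j - 2)`. Since `p * c ≡ 2s (mod 3)`, the first form
(with `e = s`) occurs when `c ≡ 2 (mod 3)`, and the second (with `e = -s`) when `c ≡ 1 (mod 3)`.
-/

lemma round_div_six {p k : ℤ} (h : p = 6 * k + 1 ∨ p = 6 * k - 1) :
    round ((p : ℚ) / 6) = k := by
  rw [round_eq, Int.floor_eq_iff]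
  rcases h with rfl | rfl <;> push_cast <;> constructor <;> linarith

lemma exists_prime_mul_of_not_prime {n : ℤ} (hn : 1 < n) (h : ¬ Prime n) :
    ∃ p c : ℤ, Prime p ∧ 1 < p ∧ 1 < c ∧ n = p * c := by
  lift n to ℕ using by omega
  rw [← Nat.prime_iff_prime_int] at h
  have hp : (n.minFac).Prime := Nat.minFac_prime (by omega)
  obtain ⟨c, hc⟩ := Nat.minFac_dvd n
  refine ⟨n.minFac, c, Nat.prime_iff_prime_int.mp hp, by exact_mod_cast hp.one_lt, ?_,
    by exact_mod_cast hc⟩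
  have h0 : c ≠ 0 := by rintro rfl; omega
  have h1 : c ≠ 1 := by
    rintro rfl
    rw [mul_one] at hc
    exact h (hc ▸ hp)
  omega

lemma emod_six_of_mul {a b n : ℤ} (hn : n % 6 = 1 ∨ n % 6 = 5) (h : n = a * b) :
    a % 6 = 1 ∨ a % 6 = 5 := by
  have h2 : ¬ (2 : ℤ) ∣ a := fun hd => by
    have : (2 : ℤ) ∣ n := h ▸ hd.mul_right b
    omega
  have h3 : ¬ (3 : ℤ) ∣ a := fun hd => by
    have : (3 : ℤ) ∣ n := h ▸ hd.mul_right b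
    omega
  omega

/-- The parent prime attached to a composite value of `3m + 2s`, where `s = ±1`. -/
lemma exists_parent_of_not_prime (m s : ℤ) (hs : s = 1 ∨ s = -1) (hodd : Odd m) (h3 : 3 < m)
    (h : ¬ Prime (3 * m + 2 * s)) :
    ∃ p : ℤ, Prime p ∧ 5 ≤ p ∧
      ((∃ j : ℤ, Odd j ∧ 1 ≤ j ∧ m = j * p + 4 * round ((p : ℚ) / 6)) ∨
       (∃ j : ℤ, Odd j ∧ 3 ≤ j ∧ m = j * p - 4 * round ((p : ℚ) / 6))) := by
  obtain ⟨t, ht⟩ := hodd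
  obtain ⟨p, c, hp, hp1, hc1, hn⟩ := exists_prime_mul_of_not_prime (by omega) h
  have hn6 : (3 * m + 2 * s) % 6 = 1 ∨ (3 * m + 2 * s) % 6 = 5 := by omega
  have hp6 := emod_six_of_mul hn6 hn
  have hc6 := emod_six_of_mul hn6 (hn.trans (mul_comm p c))
  obtain ⟨k, e, he, hpk⟩ : ∃ k e : ℤ, (e = 1 ∨ e = -1) ∧ p = 6 * k + e := by
    rcases hp6 with h' | h'
    · exact ⟨p / 6, 1, Or.inl rfl, by omega⟩
    · exact ⟨p / 6 + 1, -1, Or.inr rfl, by omega⟩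
  have hr : round ((p : ℚ) / 6) = k := round_div_six (by omega)
  refine ⟨p, hp, by omega, ?_⟩
  rw [hr]
  rcases hc6 with h' | h'
  · right
    obtain ⟨i, rfl⟩ : ∃ i, c = 6 * i + 1 := ⟨c / 6, by omega⟩
    have hexp : p * (6 * i + 1) = 6 * (p * i) + p := by ring
    refine ⟨2 * i + 1, ⟨i, rfl⟩, by omega, ?_⟩
    have hj : (2 * i + 1) * p = 2 * (p * i) + p := by ring
    omega
  · left
    obtain ⟨i, rfl⟩ : ∃ i, c = 6 * i + 5 := ⟨c / 6, by omega⟩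
    have hexp : p * (6 * i + 5) = 6 * (p * i) + 5 * p := by ring
    refine ⟨2 * i + 1, ⟨i, rfl⟩, by omega, ?_⟩
    have hj : (2 * i + 1) * p = 2 * (p * i) + p := by ring
    omega

/-- Lemma 2.6: every non-rank `m > 3` (odd, with `3m-2`, `3m+2` not both prime)
arises from some prime `p ≥ 5` as `m = j·p + 4·N(p/6)` with `j ≥ 1` odd, or as
`m = j·p - 4·N(p/6)` with `j ≥ 3` odd. -/
theorem nonrank_has_parent_prime (m : ℤ) (hodd : Odd m) (h3 : 3 < m)
    (h : ¬(Prime (3 * m - 2) ∧ Prime (3 * m + 2))) :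
    ∃ p : ℤ, Prime p ∧ 5 ≤ p ∧
      ((∃ j : ℤ, Odd j ∧ 1 ≤ j ∧ m = j * p + 4 * round ((p : ℚ) / 6)) ∨
       (∃ j : ℤ, Odd j ∧ 3 ≤ j ∧ m = j * p - 4 * round ((p : ℚ) / 6))) := by
  rcases not_and_or.mp h with h' | h'
  · exact exists_parent_of_not_prime m (-1) (Or.inr rfl) hodd h3
      (by rwa [show 3 * m + 2 * (-1) = 3 * m - 2 by ring])
  · exact exists_parent_of_not_prime m 1 (Or.inl rfl) hodd h3 (by rwa [mul_one])
end

section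
/- If m ≥ 5 is a twin-4 rank, then m mod 70 ∈ {5, 7, 13, 15, 23, 27, 33, 35, 37, 43, 47, 55, 57, 63, 65}; equivalently, every twin-4 rank m ≥ 5 lies in one of the fifteen arithmetic progressions 5·7(2n+1)+c with c ∈ {0, 2, 8, 12, 20, 22, 28, 30, 40, 42, 48, 50, 58, 62, 68}. -/
/-!
Since `m ≥ 5`, both primes `3 * m ± 2` exceed `7`, so neither is divisible by `5` or `7`. As `3` is
invertible modulo `5` and `7`, this says `m % 5 ∉ {1, 4}` and `m % 7 ∉ {3, 4}`. Together with
`m` odd, the Chinese remainder theorem leaves `1 * 3 * 5 = 15` classes modulo `70`.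
-/

theorem not_dvd_of_prime_of_lt {p q : ℤ} (hp : Prime p) (hq : 1 < q) (hqp : q < p) :
    ¬ q ∣ p := by
  intro hdvd
  rcases (Int.associated_iff.mp (hp.irreducible.dvd_iff.mp hdvd |>.resolve_left
    (by rw [Int.isUnit_iff]; omega))) with h | h <;> omega

/-- Proposition 3.5: every twin-4 rank `m ≥ 5` satisfies
`m mod 70 ∈ {5,7,13,15,23,27,33,35,37,43,47,55,57,63,65}`, i.e. lies in one of the
fifteen progressions `35(2n+1)+c` with `c ∈ {0,2,8,12,20,22,28,30,40,42,48,50,58,62,68}`. -/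
theorem twin4Rank_mod_seventy (m : ℤ) (hodd : Odd m) (h5 : 5 ≤ m)
    (h : Prime (3 * m - 2) ∧ Prime (3 * m + 2)) :
    m % 70 ∈ ({5, 7, 13, 15, 23, 27, 33, 35, 37, 43, 47, 55, 57, 63, 65} : Set ℤ) := by
  obtain ⟨hl, hr⟩ := h
  have l5 : ¬ (5 : ℤ) ∣ 3 * m - 2 := not_dvd_of_prime_of_lt hl (by norm_num) (by omega)
  have l7 : ¬ (7 : ℤ) ∣ 3 * m - 2 := not_dvd_of_prime_of_lt hl (by norm_num) (by omega)
  have r5 : ¬ (5 : ℤ) ∣ 3 * m + 2 := not_dvd_of_prime_of_lt hr (by norm_num) (by omega)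
  have r7 : ¬ (7 : ℤ) ∣ 3 * m + 2 := not_dvd_of_prime_of_lt hr (by norm_num) (by omega)
  have h2 : m % 2 = 1 := Int.odd_iff.mp hodd
  simp only [Set.mem_insert_iff, Set.mem_singleton_iff]
  have h0 : 0 ≤ m % 70 := by omega
  have h70 : m % 70 < 70 := by omega
  generalize hr : m % 70 = r at *
  interval_cases r <;> omega
end

section
/- Let p ≥ 5 be such that p and p' = p+2 are both prime (so p ≡ 5 (mod 6)), and let n ≥ 0 be an integer. Set m⁺ = p(p+2)(2n+1) + 2(p+1)/3 and m⁻ = p(p+2)(2n+1) - 2(p+1)/3; both are positive odd integers. Then p divides 3m⁺-2 and p+2 divides 3m⁺+2, while p divides 3m⁻+2 and p+2 divides 3m⁻-2. Consequently m⁺ and m⁻ are common non-ranks of p and p+2: in each case the number 3m±2 divisible by p (resp. p+2) is composite. -/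
/-!
A product of two integers, each at least `2`, is not prime. Hence primality of `p ≥ 5` and `p + 2`
excludes every residue of `p` mod `6` except `5`. Writing `p = 6k + 5`, the offset `2(p+1)/3` is
the even number `4k + 4`, so `m⁺` and `m⁻` are odd. With `c = 2n + 1`, everything else follows from
`3m⁺ - 2 = p (3(p+2)c + 2)`, `3m⁺ + 2 = (p+2)(3pc + 2)`,
`3m⁻ + 2 = p (3(p+2)c - 2)`, `3m⁻ - 2 = (p+2)(3pc - 2)`.
-/

theorem not_prime_mul_of_two_le {a b : ℤ} (ha : 2 ≤ a) (hb : 2 ≤ b) : ¬ Prime (a * b) := by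
  intro h
  rcases h.irreducible.isUnit_or_isUnit rfl with h | h <;> rw [Int.isUnit_iff] at h <;> omega


/-- Theorem 3.8: let `p ≥ 5` with `p`, `p+2` both prime (so `p ≡ 5 (mod 6)`), and
`n ≥ 0`.  Then `m⁺ = p(p+2)(2n+1) + 2(p+1)/3` and `m⁻ = p(p+2)(2n+1) - 2(p+1)/3`
are positive odd common non-ranks of `p` and `p+2`: `p ∣ 3m⁺-2`, `p+2 ∣ 3m⁺+2`,
`p ∣ 3m⁻+2`, `p+2 ∣ 3m⁻-2`, and in each case the pair `(3m±2)` contains a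
composite number. -/
theorem twin_primes_common_nonranks (p : ℤ) (hp : Prime p) (h5 : 5 ≤ p)
    (hp2 : Prime (p + 2)) (n : ℤ) (hn : 0 ≤ n) (mp mm : ℤ)
    (hmp : mp = p * (p + 2) * (2 * n + 1) + 2 * (p + 1) / 3)
    (hmm : mm = p * (p + 2) * (2 * n + 1) - 2 * (p + 1) / 3) :
    p % 6 = 5 ∧
    0 < mp ∧ Odd mp ∧ 0 < mm ∧ Odd mm ∧
    p ∣ 3 * mp - 2 ∧ (p + 2) ∣ 3 * mp + 2 ∧
    p ∣ 3 * mm + 2 ∧ (p + 2) ∣ 3 * mm - 2 ∧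
    ¬(Prime (3 * mp - 2) ∧ Prime (3 * mp + 2)) ∧
    ¬(Prime (3 * mm - 2) ∧ Prime (3 * mm + 2)) := by
  have key : ∀ q d : ℤ, Prime q → 2 ≤ d → d < q → ¬ d ∣ q := by
    rintro q d hq hd hlt ⟨e, rfl⟩
    exact not_prime_mul_of_two_le hd (by nlinarith) hq
  have h2 := key p 2 hp (by norm_num) (by omega)
  have h3 := key p 3 hp (by norm_num) (by omega)
  have h3' := key (p + 2) 3 hp2 (by norm_num) (by omega)
  have m3 : p % 3 = 2 := by clear hmp hmm; omega
  have h6 : p % 6 = 5 := by clear hmp hmm; omega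
  obtain ⟨k, rfl⟩ : ∃ k, p = 6 * k + 5 := ⟨p / 6, by omega⟩
  have hk : 0 ≤ k := by omega
  have hd : 2 * (6 * k + 5 + 1) / 3 = 4 * k + 4 := by omega
  rw [hd] at hmp hmm
  have e1 : 3 * mp - 2 = (6 * k + 5) * (3 * (6 * k + 5 + 2) * (2 * n + 1) + 2) := by
    rw [hmp]; ring
  have e2 : 3 * mp + 2 = (6 * k + 5 + 2) * (3 * (6 * k + 5) * (2 * n + 1) + 2) := by
    rw [hmp]; ring
  have e3 : 3 * mm + 2 = (6 * k + 5) * (3 * (6 * k + 5 + 2) * (2 * n + 1) - 2) := by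
    rw [hmm]; ring
  have e4 : 3 * mm - 2 = (6 * k + 5 + 2) * (3 * (6 * k + 5) * (2 * n + 1) - 2) := by
    rw [hmm]; ring
  have hkn : 0 ≤ k * n := mul_nonneg hk hn
  have hkkn : 0 ≤ k * k * n := mul_nonneg (mul_nonneg hk hk) hn
  refine ⟨h6, by rw [hmp]; positivity, ?_, by rw [hmm]; nlinarith, ?_, ⟨_, e1⟩, ⟨_, e2⟩,
    ⟨_, e3⟩, ⟨_, e4⟩, ?_, ?_⟩
  · exact ⟨(6 * k + 5) * (6 * k + 7) * n + 18 * k ^ 2 + 38 * k + 19, by rw [hmp]; ring⟩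
  · exact ⟨(6 * k + 5) * (6 * k + 7) * n + 18 * k ^ 2 + 34 * k + 15, by rw [hmm]; ring⟩
  · rw [e1]
    exact fun h => not_prime_mul_of_two_le (by omega) (by nlinarith) h.1
  · rw [e3]
    exact fun h => not_prime_mul_of_two_le (by omega) (by nlinarith) h.2
end

section
/- Let p < p' be primes with p ≡ p' ≡ 5 (mod 6), so p' = p + 6l for some integer l ≥ 1. Suppose integers r, r' satisfy (r' - r)·p = 2l(3r + 1). Then for every integer n ≥ 0 the identity p·(p'(2n+1) + 2r') + 2(p+1)/3 = p'·(p(2n+1) + 2r) + 2(p'+1)/3 holds, and the common value m of the two sides satisfies p | 3m - 2 and p' | 3m - 2; in particular m is a common non-rank of p and p'. -/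
/-! Since `q ≡ 5 (mod 6)`, the quotient `2 * (q + 1) / 3` is exact, so
`m = q * A + 2 * (q + 1) / 3` gives `3 * m - 2 = q * (3 * A + 2)`. The relation
between `r` and `r'` is exactly half the difference of the two expressions for `m`,
so this applies to both primes. The number `m` is odd because `p * p' * (2 * n + 1)`
is odd and the remaining terms are even. -/


/-- Theorem 3.9 (i), first sign: let `p < p'` be primes `≡ 5 (mod 6)`, so
`p' = p + 6l` with `l ≥ 1`, and suppose `(r'-r)p = 2l(3r+1)`.  Then for every
`n ≥ 0` the two expressions `p(p'(2n+1)+2r') + 2(p+1)/3` and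
`p'(p(2n+1)+2r) + 2(p'+1)/3` agree, and their common value `m` is odd and
satisfies `p ∣ 3m-2` and `p' ∣ 3m-2`; in particular `m` is a common non-rank of
`p` and `p'`. -/
theorem common_nonranks_of_prime_pair (p p' l r r' : ℤ) (hp : Prime p)
    (hp' : Prime p') (h5 : 5 ≤ p) (hlt : p < p')
    (hpm : p % 6 = 5) (hpm' : p' % 6 = 5)
    (hl : p' = p + 6 * l) (hl1 : 1 ≤ l)
    (hrr : (r' - r) * p = 2 * l * (3 * r + 1)) (n : ℤ) (hn : 0 ≤ n) :
    p * (p' * (2 * n + 1) + 2 * r') + 2 * (p + 1) / 3 =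
      p' * (p * (2 * n + 1) + 2 * r) + 2 * (p' + 1) / 3 ∧
    ∀ m : ℤ, m = p * (p' * (2 * n + 1) + 2 * r') + 2 * (p + 1) / 3 →
      Odd m ∧ p ∣ 3 * m - 2 ∧ p' ∣ 3 * m - 2 := by
  obtain ⟨k, rfl⟩ : ∃ k, p = 6 * k + 5 := ⟨p / 6, by omega⟩
  subst hl
  -- Both quotients are exact, since `6j + 5 + 1` is divisible by 3.
  have e1 : 2 * (6 * k + 5 + 1) / 3 = 4 * k + 4 := by omega
  have e2 : 2 * (6 * k + 5 + 6 * l + 1) / 3 = 4 * (k + l) + 4 := by omega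
  rw [e1, e2]
  have key : (6 * k + 5) * ((6 * k + 5 + 6 * l) * (2 * n + 1) + 2 * r') + (4 * k + 4) =
      (6 * k + 5 + 6 * l) * ((6 * k + 5) * (2 * n + 1) + 2 * r) + (4 * (k + l) + 4) := by
    linear_combination 2 * hrr
  refine ⟨key, ?_⟩
  rintro m rfl
  refine ⟨?_, ?_, ?_⟩
  · have h1 : Odd (6 * k + 5) := ⟨3 * k + 2, by ring⟩
    have h2 : Odd (6 * k + 5 + 6 * l) := ⟨3 * k + 3 * l + 2, by ring⟩
    have h3 : Odd (2 * n + 1) := ⟨n, rfl⟩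
    exact (h1.mul ((h2.mul h3).add_even ⟨r', by ring⟩)).add_even ⟨2 * k + 2, by ring⟩
  -- If `m = q * A + 2 * (q + 1) / 3`, then `3 * m - 2 = q * (3 * A + 2)`.
  · exact ⟨3 * ((6 * k + 5 + 6 * l) * (2 * n + 1) + 2 * r') + 2, by ring⟩
  · rw [key]
    exact ⟨3 * ((6 * k + 5) * (2 * n + 1) + 2 * r) + 2, by ring⟩
end

section
/- Let p ≥ 5 be prime and let L(p) denote the product of all primes q with 5 ≤ q ≤ p. Then the number of odd integers n with 1 ≤ n ≤ 2·L(p) such that p divides (3n-2)(3n+2) and no prime q with 5 ≤ q < p divides (3n-2)(3n+2) equals 2·∏_{5 ≤ q < p, q prime} (q - 2). (Per half-period L(p) this is the paper's count G(p) = ∏_{5 ≤ q < p}(q-2) of non-ranks with parent prime p.) -/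
/-!
Modulo a prime `q ≥ 5` the congruence `(3x-2)(3x+2) ≡ 0` has exactly the two solutions `±2/3`,
which are distinct because `q ∤ 4`. The modulus `L` is odd, so each residue class modulo `L` has
exactly one odd representative in `[1, 2L]`, and by the Chinese remainder theorem the odd integers
of that interval correspond bijectively to families of residues modulo the primes `5 ≤ q ≤ p`
(`ncard_odd_residues`). Having parent prime `p` prescribes one of the two roots modulo `p` and
forbids both roots modulo each smaller `q`, which leaves `2 · ∏ (q - 2)` families.
-/

/-- Chinese remainder theorem as a count: for pairwise coprime odd moduli `a i` with product `L`,
the odd integers in `[1, 2L]` whose residue modulo each `a i` lies in a prescribed set `B i`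
number `∏ i, #(B i)`. -/
theorem ncard_odd_residues {ι : Type*} [Fintype ι] [DecidableEq ι] (a : ι → ℕ)
    (hodd : ∀ i, Odd (a i)) (hco : Pairwise (Function.onFun Nat.Coprime a))
    (B : (i : ι) → Finset (ZMod (a i))) :
    {n : ℕ | 1 ≤ n ∧ n ≤ 2 * ∏ i, a i ∧ Odd n ∧ ∀ i, (n : ZMod (a i)) ∈ B i}.ncard =
      ∏ i, (B i).card := by
  have hLodd : Odd (∏ i, a i) := Finset.prod_induction a Odd (fun _ _ => Odd.mul) odd_one
    fun i _ => hodd i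
  set L := ∏ i, a i with hL
  have hLpos : 0 < L := hLodd.pos
  have : NeZero L := ⟨hLpos.ne'⟩
  rw [← Fintype.card_piFinset, ← Set.ncard_coe_finset]
  refine Set.ncard_congr (fun n _ i => (n : ZMod (a i))) ?_ ?_ ?_
  · rintro n ⟨-, -, -, h⟩
    simpa using h
  · rintro m n ⟨hm1, hm2, hmo, -⟩ ⟨hn1, hn2, hno, -⟩ h
    have hmod : m ≡ n [MOD L] := by
      have key : ∀ i, (a i : ℤ) ∣ (n : ℤ) - m := fun i =>
        (Nat.modEq_iff_dvd).1 ((ZMod.natCast_eq_natCast_iff _ _ _).1 (congrFun h i))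
      refine (Nat.modEq_iff_dvd).2 ?_
      rw [hL, Nat.cast_prod]
      exact Fintype.prod_dvd_of_coprime (fun i j hij => (hco hij).isCoprime) key
    have h2 : m ≡ n [MOD 2] := by
      rw [Nat.ModEq, Nat.odd_iff.1 hmo, Nat.odd_iff.1 hno]
    have hc : m ≡ n [MOD 2 * L] :=
      (Nat.modEq_and_modEq_iff_modEq_mul (Nat.coprime_two_left.2 hLodd)).1 ⟨h2, hmod⟩
    -- Representatives run over `[1, 2L]`, not `[0, 2L)`, so the bound is on the difference.
    refine Nat.ModEq.eq_of_abs_lt hc ?_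
    rw [abs_lt]
    omega
  · intro b hb
    let x : ZMod L := (ZMod.prodEquivPi a hco).symm b
    have hx : ∀ n : ℕ, (n : ZMod L) = x → ∀ i, (n : ZMod (a i)) = b i := by
      intro n hn i
      have h1 : ZMod.prodEquivPi a hco (n : ZMod L) = b := by
        rw [hn]; exact (ZMod.prodEquivPi a hco).apply_symm_apply b
      rw [map_natCast] at h1
      exact congrFun h1 i
    -- Of the two lifts `x.val` and `x.val + L` exactly one is odd.
    obtain ⟨n, hn, hno, hle⟩ : ∃ n : ℕ, (n : ZMod L) = x ∧ Odd n ∧ n ≤ 2 * L := by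
      have hlt := ZMod.val_lt x
      rcases Nat.even_or_odd x.val with he | ho
      · exact ⟨x.val + L, by simp, he.add_odd hLodd, by omega⟩
      · exact ⟨x.val, by simp, ho, by omega⟩
    have hbn := hx n hn
    refine ⟨n, ⟨hno.pos, hle, hno, fun i => ?_⟩, funext hbn⟩
    rw [hbn i]
    exact Fintype.mem_piFinset.1 hb i

/-- The roots of `(3x-2)(3x+2)` modulo `q`; these are the residues `±2/3` for a prime `q ≥ 5`. -/
def rankRoots (q : ℕ) [NeZero q] : Finset (ZMod q) :=
  Finset.univ.filter fun x => (3 * x - 2) * (3 * x + 2) = 0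

theorem card_rankRoots (q : ℕ) [NeZero q] (hq : q.Prime) (h5 : 5 ≤ q) :
    (rankRoots q).card = 2 := by
  have := Fact.mk hq
  have h3 : (3 : ZMod q) ≠ 0 := by
    intro h
    have := Nat.le_of_dvd (by norm_num) ((ZMod.natCast_eq_zero_iff 3 q).1 (by exact_mod_cast h))
    omega
  have h4 : (4 : ZMod q) ≠ 0 := by
    intro h
    have := Nat.le_of_dvd (by norm_num) ((ZMod.natCast_eq_zero_iff 4 q).1 (by exact_mod_cast h))
    omega
  rw [Finset.card_eq_two]
  refine ⟨2 / 3, -2 / 3, fun h => h4 ?_, ?_⟩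
  · field_simp at h
    linear_combination h
  · ext x
    simp only [rankRoots, Finset.mem_filter, Finset.mem_univ, true_and, Finset.mem_insert,
      Finset.mem_singleton, mul_eq_zero, eq_div_iff h3]
    refine or_congr ⟨fun h => ?_, fun h => ?_⟩ ⟨fun h => ?_, fun h => ?_⟩ <;>
      linear_combination h

theorem natCast_mem_rankRoots (q : ℕ) [NeZero q] {n : ℕ} (hn : 1 ≤ n) :
    (n : ZMod q) ∈ rankRoots q ↔ q ∣ (3 * n - 2) * (3 * n + 2) := by
  rw [← ZMod.natCast_eq_zero_iff, rankRoots, Finset.mem_filter]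
  -- `1 ≤ n` keeps the subtraction `3 * n - 2` from truncating.
  push_cast [Nat.cast_sub (show 2 ≤ 3 * n by omega)]
  simp

/-- Proposition 4.3: for a prime `p ≥ 5` with `L(p) = ∏_{5 ≤ q ≤ p} q`, the number
of odd `n` with `1 ≤ n ≤ 2L(p)` whose parent prime is `p` (i.e. `p ∣ (3n-2)(3n+2)`
and no prime `5 ≤ q < p` divides `(3n-2)(3n+2)`) equals `2·∏_{5 ≤ q < p}(q-2)`,
i.e. `G(p) = ∏_{5 ≤ q < p}(q-2)` per half-period. -/
theorem count_nonranks_parent_prime (p : ℕ) (hp : p.Prime) (h5 : 5 ≤ p) (L : ℕ)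
    (hL : L = ∏ q ∈ (Finset.Icc 5 p).filter Nat.Prime, q) :
    {n : ℕ | 1 ≤ n ∧ n ≤ 2 * L ∧ Odd n ∧ p ∣ (3 * n - 2) * (3 * n + 2) ∧
        ∀ q : ℕ, q.Prime → 5 ≤ q → q < p →
          ¬ q ∣ (3 * n - 2) * (3 * n + 2)}.ncard =
      2 * ∏ q ∈ (Finset.Ico 5 p).filter Nat.Prime, (q - 2) := by
  set S := (Finset.Icc 5 p).filter Nat.Prime with hS
  have hmem : ∀ q, q ∈ S ↔ (5 ≤ q ∧ q ≤ p) ∧ q.Prime := by simp [hS]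
  have hpr : ∀ q : S, (q : ℕ).Prime := fun q => ((hmem _).1 q.2).2
  have hge : ∀ q : S, 5 ≤ (q : ℕ) := fun q => ((hmem _).1 q.2).1.1
  have : ∀ q : S, NeZero (q : ℕ) := fun q => ⟨(hpr q).ne_zero⟩
  let B : (q : S) → Finset (ZMod (q : ℕ)) := fun q =>
    if (q : ℕ) = p then rankRoots q else (rankRoots q)ᶜ
  have hcard : ∀ q : S, (B q).card = if (q : ℕ) = p then 2 else (q : ℕ) - 2 := by
    intro q
    by_cases h : (q : ℕ) = p
    · simp only [B, if_pos h, card_rankRoots _ (hpr q) (hge q)]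
    · simp only [B, if_neg h, Finset.card_compl, ZMod.card, card_rankRoots _ (hpr q) (hge q)]
  have main := ncard_odd_residues (fun q : S => (q : ℕ))
    (fun q => (hpr q).odd_of_ne_two (by have := hge q; omega))
    (fun q r hqr => (Nat.coprime_primes (hpr q) (hpr r)).2 fun h => hqr (Subtype.ext h)) B
  have hset : {n : ℕ | 1 ≤ n ∧ n ≤ 2 * L ∧ Odd n ∧ p ∣ (3 * n - 2) * (3 * n + 2) ∧
        ∀ q : ℕ, q.Prime → 5 ≤ q → q < p → ¬ q ∣ (3 * n - 2) * (3 * n + 2)} =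
      {n : ℕ | 1 ≤ n ∧ n ≤ 2 * ∏ q : S, (q : ℕ) ∧ Odd n ∧
        ∀ q : S, (n : ZMod (q : ℕ)) ∈ B q} := by
    ext n
    rw [Set.mem_ofPred_eq, Set.mem_ofPred_eq, Finset.prod_coe_sort S fun q => q, ← hL]
    refine and_congr_right fun hn => and_congr_right fun _ => and_congr_right fun _ => ?_
    constructor
    · rintro ⟨hdiv, hnot⟩ q
      by_cases h : (q : ℕ) = p
      · simp only [B, if_pos h, natCast_mem_rankRoots _ hn]
        rwa [h]
      · simp only [B, if_neg h, Finset.mem_compl, natCast_mem_rankRoots _ hn]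
        exact hnot q (hpr q) (hge q) (lt_of_le_of_ne ((hmem _).1 q.2).1.2 h)
    · intro h
      refine ⟨?_, fun q hq hq5 hqp => ?_⟩
      · have := h ⟨p, (hmem p).2 ⟨⟨h5, le_rfl⟩, hp⟩⟩
        simpa only [B, if_true, natCast_mem_rankRoots _ hn] using this
      · have := h ⟨q, (hmem q).2 ⟨⟨hq5, hqp.le⟩, hq⟩⟩
        simpa only [B, if_neg hqp.ne, Finset.mem_compl, natCast_mem_rankRoots _ hn] using this
  rw [hset, main, Finset.prod_congr rfl fun q _ => hcard q,
    Finset.prod_coe_sort S fun q => if q = p then 2 else q - 2]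
  have hins : S = insert p ((Finset.Ico 5 p).filter Nat.Prime) := by
    ext q
    simp only [hmem, Finset.mem_insert, Finset.mem_filter, Finset.mem_Ico]
    constructor
    · rintro ⟨⟨h1, h2⟩, h3⟩
      rcases h2.eq_or_lt with h | h
      · exact Or.inl h
      · exact Or.inr ⟨⟨h1, h⟩, h3⟩
    · rintro (rfl | ⟨⟨h1, h2⟩, h3⟩)
      · exact ⟨⟨h5, le_rfl⟩, hp⟩
      · exact ⟨⟨h1, h2.le⟩, h3⟩
  rw [hins, Finset.prod_insert (by simp), if_pos rfl]
  congr 1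
  refine Finset.prod_congr rfl fun q hq => if_neg ?_
  simp only [Finset.mem_filter, Finset.mem_Ico] at hq
  omega
end

section
/- Let p_j ≥ 5 be prime and let L = L(p_j) be the product of all primes q with 5 ≤ q ≤ p_j. Then the number of odd integers n with 1 ≤ n ≤ 2L such that some prime q with 5 ≤ q ≤ p_j divides (3n-2)(3n+2) equals L - ∏_{5 ≤ q ≤ p_j, q prime} (q - 2). (This is twice the paper's supergroup count S(p_j) = (L/2)·(1 - ∏_{5 ≤ q ≤ p_j}(q-2)/q).) -/
/-!
Write the odd integers in `[1, 2L]` as `n = 2k + 1` with `0 ≤ k < L`; then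
`(3n - 2)(3n + 2) = (6k + 1)(6k + 5)`. For a prime `q ≥ 5` the residues `k` modulo `q` at which
`q` divides this product are exactly two distinct ones, since `6` is invertible modulo `q` and the
factors differ by `4`. So `q - 2` residues survive (`card_survivors_prime`), and by the Chinese
remainder theorem (`card_filter_range_mul`) the `k < L` that survive every `q` number
`∏ (q - 2)` (`card_survivors`). The count in question is that of the complement.
-/

/-- The Chinese remainder theorem as a counting statement: conditions that are periodic modulo
coprime moduli are independent on a full period. -/
lemma card_filter_range_mul {a b : ℕ} (hab : a.Coprime b) (ha : 0 < a) (hb : 0 < b)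
    (P Q : ℕ → Prop) [DecidablePred P] [DecidablePred Q]
    (hP : ∀ k, P (k % a) ↔ P k) (hQ : ∀ k, Q (k % b) ↔ Q k) :
    ((Finset.range (a * b)).filter (fun k => P k ∧ Q k)).card =
      ((Finset.range a).filter P).card * ((Finset.range b).filter Q).card := by
  rw [← Finset.card_product]
  refine Finset.card_bij (fun k _ => (k % a, k % b)) ?_ ?_ ?_
  · intro k hk
    simp only [Finset.mem_filter, Finset.mem_range, Finset.mem_product] at hk ⊢
    exact ⟨⟨Nat.mod_lt _ ha, (hP k).2 hk.2.1⟩, ⟨Nat.mod_lt _ hb, (hQ k).2 hk.2.2⟩⟩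
  · intro k hk l hl h
    simp only [Finset.mem_filter, Finset.mem_range] at hk hl
    have h' := Prod.mk.inj h
    exact Nat.ModEq.eq_of_lt_of_lt
      ((Nat.modEq_and_modEq_iff_modEq_mul hab).1 ⟨h'.1, h'.2⟩) hk.1 hl.1
  · rintro ⟨x, y⟩ h
    simp only [Finset.mem_filter, Finset.mem_range, Finset.mem_product] at h
    obtain ⟨⟨hx, hPx⟩, hy, hQy⟩ := h
    have hz := (Nat.chineseRemainder hab x y).2
    have hza : (Nat.chineseRemainder hab x y : ℕ) % a = x := by
      rw [hz.1, Nat.mod_eq_of_lt hx]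
    have hzb : (Nat.chineseRemainder hab x y : ℕ) % b = y := by
      rw [hz.2, Nat.mod_eq_of_lt hy]
    refine ⟨Nat.chineseRemainder hab x y, ?_, by rw [hza, hzb]⟩
    simp only [Finset.mem_filter, Finset.mem_range]
    refine ⟨Nat.chineseRemainder_lt_mul hab x y ha.ne' hb.ne', ?_, ?_⟩
    · rw [← hP, hza]; exact hPx
    · rw [← hQ, hzb]; exact hQy

lemma dvd_factors_mod {q m : ℕ} (h : q ∣ m) (k : ℕ) :
    q ∣ (6 * (k % m) + 1) * (6 * (k % m) + 5) ↔ q ∣ (6 * k + 1) * (6 * k + 5) := by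
  have hk : k % m ≡ k [MOD q] := (Nat.mod_modEq k m).of_dvd h
  exact (((hk.mul_left 6).add_right 1).mul ((hk.mul_left 6).add_right 5)).dvd_iff dvd_rfl

lemma existsUnique_root {p : ℕ} (hp : p.Prime) (h5 : 5 ≤ p) (c : ℕ) :
    ∃ a < p, ∀ k < p, p ∣ 6 * k + c ↔ k = a := by
  haveI : Fact p.Prime := ⟨hp⟩
  have h6 : (6 : ZMod p) ≠ 0 := by
    intro h
    have h' : p ∣ 2 * 3 := (ZMod.natCast_eq_zero_iff 6 p).1 (by exact_mod_cast h)
    rcases hp.dvd_mul.1 h' with h' | h' <;> have := Nat.le_of_dvd (by norm_num) h' <;> omega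
  refine ⟨(-(c : ZMod p) / 6).val, ZMod.val_lt _, fun k hk => ?_⟩
  rw [← ZMod.natCast_eq_zero_iff]
  push_cast
  constructor
  · intro h
    have : (k : ZMod p) = -(c : ZMod p) / 6 := by
      rw [eq_div_iff h6]; linear_combination h
    rw [← this, ZMod.val_natCast, Nat.mod_eq_of_lt hk]
  · intro h
    rw [h, ZMod.natCast_zmod_val]
    field_simp
    ring

lemma card_survivors_prime {p : ℕ} (hp : p.Prime) (h5 : 5 ≤ p) :
    ((Finset.range p).filter (fun k => ¬ p ∣ (6 * k + 1) * (6 * k + 5))).card = p - 2 := by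
  obtain ⟨a, ha, hra⟩ := existsUnique_root hp h5 1
  obtain ⟨b, hb, hrb⟩ := existsUnique_root hp h5 5
  have hab : a ≠ b := by
    rintro rfl
    have h4 : p ∣ (6 * a + 5) - (6 * a + 1) :=
      Nat.dvd_sub ((hrb a ha).2 rfl) ((hra a ha).2 rfl)
    have := Nat.le_of_dvd (by omega) h4
    omega
  have h : (Finset.range p).filter (fun k => ¬ p ∣ (6 * k + 1) * (6 * k + 5)) =
      Finset.range p \ {a, b} := by
    ext k
    simp only [Finset.mem_filter, Finset.mem_range, Finset.mem_sdiff, Finset.mem_insert,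
      Finset.mem_singleton]
    refine and_congr_right fun hk => ?_
    rw [hp.dvd_mul, hra k hk, hrb k hk]
  rw [h, Finset.card_sdiff_of_subset, Finset.card_range, Finset.card_pair hab]
  intro k hk
  simp only [Finset.mem_insert, Finset.mem_singleton] at hk
  rcases hk with rfl | rfl <;> simpa

lemma card_survivors (s : Finset ℕ) (hs : ∀ q ∈ s, q.Prime ∧ 5 ≤ q) :
    ((Finset.range (∏ q ∈ s, q)).filter
      (fun k => ∀ q ∈ s, ¬ q ∣ (6 * k + 1) * (6 * k + 5))).card = ∏ q ∈ s, (q - 2) := by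
  induction s using Finset.induction_on with
  | empty => simp
  | insert p s hps ih =>
    obtain ⟨hp, h5⟩ := hs p (Finset.mem_insert_self _ _)
    have hs' : ∀ q ∈ s, q.Prime ∧ 5 ≤ q := fun q hq => hs q (Finset.mem_insert_of_mem hq)
    have hcop : p.Coprime (∏ q ∈ s, q) := by
      refine Nat.Coprime.prod_right fun q hq => (Nat.coprime_primes hp (hs' q hq).1).2 ?_
      rintro rfl
      exact hps hq
    rw [Finset.prod_insert hps, Finset.prod_insert hps, ← ih hs', ← card_survivors_prime hp h5]
    simp only [Finset.forall_mem_insert]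
    refine card_filter_range_mul hcop hp.pos
      (Finset.prod_pos fun q hq => (hs' q hq).1.pos) _ _ ?_ ?_
    · exact fun k => not_congr (dvd_factors_mod dvd_rfl k)
    · exact fun k => forall₂_congr fun q hq =>
        not_congr (dvd_factors_mod (Finset.dvd_prod_of_mem _ hq) k)


/-- Proposition 4.5 (ii): for a prime `p_j ≥ 5` with `L = ∏_{5 ≤ q ≤ p_j} q`, the
number of odd `n` with `1 ≤ n ≤ 2L` that are non-ranks of some prime
`5 ≤ q ≤ p_j` (i.e. `q ∣ (3n-2)(3n+2)`) equals `L - ∏_{5 ≤ q ≤ p_j}(q-2)`,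
twice the supergroup count `S(p_j)`. -/
theorem count_supergroup_nonranks (pj : ℕ) (hpj : pj.Prime) (h5 : 5 ≤ pj) (L : ℕ)
    (hL : L = ∏ q ∈ (Finset.Icc 5 pj).filter Nat.Prime, q) :
    {n : ℕ | 1 ≤ n ∧ n ≤ 2 * L ∧ Odd n ∧
        ∃ q : ℕ, q.Prime ∧ 5 ≤ q ∧ q ≤ pj ∧
          q ∣ (3 * n - 2) * (3 * n + 2)}.ncard =
      L - ∏ q ∈ (Finset.Icc 5 pj).filter Nat.Prime, (q - 2) := by
  have hset : {n : ℕ | 1 ≤ n ∧ n ≤ 2 * L ∧ Odd n ∧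
        ∃ q : ℕ, q.Prime ∧ 5 ≤ q ∧ q ≤ pj ∧ q ∣ (3 * n - 2) * (3 * n + 2)} =
      (((Finset.range L).filter (fun k => ¬ ∀ q ∈ (Finset.Icc 5 pj).filter Nat.Prime,
        ¬ q ∣ (6 * k + 1) * (6 * k + 5))).image (fun k => 2 * k + 1) : Finset ℕ) := by
    have hfac : ∀ k : ℕ, (3 * (2 * k + 1) - 2) * (3 * (2 * k + 1) + 2) =
        (6 * k + 1) * (6 * k + 5) := fun k => by
      rw [show 3 * (2 * k + 1) - 2 = 6 * k + 1 by omega,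
        show 3 * (2 * k + 1) + 2 = 6 * k + 5 by omega]
    ext n
    simp only [Set.mem_setOf_eq, Finset.coe_image, Set.mem_image, Finset.mem_coe,
      Finset.mem_filter, Finset.mem_range, Finset.mem_Icc, not_forall, not_not]
    constructor
    · rintro ⟨-, h2, ⟨k, rfl⟩, q, hq, hq5, hqp, hd⟩
      exact ⟨k, ⟨by omega, q, ⟨⟨hq5, hqp⟩, hq⟩, hfac k ▸ hd⟩, rfl⟩
    · rintro ⟨k, ⟨hk, q, ⟨⟨hq5, hqp⟩, hq⟩, hd⟩, rfl⟩
      exact ⟨by omega, by omega, ⟨k, rfl⟩, q, hq, hq5, hqp, (hfac k).symm ▸ hd⟩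
  have hcard := card_survivors ((Finset.Icc 5 pj).filter Nat.Prime) (fun q hq => by
    simp only [Finset.mem_filter, Finset.mem_Icc] at hq
    exact ⟨hq.2, hq.1.1⟩)
  rw [← hL] at hcard
  have hsplit := Finset.card_filter_add_card_filter_not (s := Finset.range L)
    (fun k => ∀ q ∈ (Finset.Icc 5 pj).filter Nat.Prime, ¬ q ∣ (6 * k + 1) * (6 * k + 5))
  rw [Finset.card_range, hcard] at hsplit
  rw [hset, Set.ncard_coe_finset, Finset.card_image_of_injective _ (fun x y h => by
    simpa using h)]
  omega
end
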